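/- Let F be a finite field with q elements, let r ≥ 2, and let b₁, …, b_r be an affine basis of the affine space F^(r−1). Then the number of affine hyperplanes H of F^(r−1) (affine subspaces of dimension r−2) such that bᵢ ∉ H for every i = 1, …, r is exactly (q−1)^(r−1) − 1. -/

import Mathlib

/-!
Take a basis point `b i₀` as origin. The hyperplanes missing it are exactly the sets
`{x | φ (x -ᵥ b i₀) = 1}` for nonzero linear functionals `φ`, and `φ` is unique. Such a hyperplane
misses the other basis points iff `φ` does not take the value `1` on the basis `b j -ᵥ b i₀`,
`j ≠ i₀`, of the space of translations. So the values of `φ` on this basis range freely over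
`F \ {1}`, except that they may not all be `0`.
-/

open Module

section PolarHyperplane

variable {k V P : Type*} [AddCommGroup V] [AddTorsor V P]

section Ring

variable [Ring k] [Module k V]

/-- The affine subspace polar to the functional `φ` with respect to the origin `o`. Over a division
ring it is a hyperplane not containing `o` if `φ ≠ 0`; it is empty if `φ = 0`. -/
def polarHyperplane (o : P) (φ : Dual k V) : AffineSubspace k P where
  carrier := {x | φ (x -ᵥ o) = 1}
  smul_vsub_vadd_mem' c x y z hx hy hz := by
    have hxy : φ (x -ᵥ y) = 0 := by
      rw [← vsub_sub_vsub_cancel_right x y o, map_sub, hx, hy, sub_self]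
    simpa [vadd_vsub_assoc, hxy] using hz

@[simp]
theorem mem_polarHyperplane {o x : P} {φ : Dual k V} :
    x ∈ polarHyperplane o φ ↔ φ (x -ᵥ o) = 1 :=
  Iff.rfl

theorem direction_polarHyperplane {o : P} {φ : Dual k V}
    (hne : (polarHyperplane o φ : Set P).Nonempty) :
    (polarHyperplane o φ).direction = φ.ker := by
  obtain ⟨p, hp⟩ := hne
  ext v
  rw [← AffineSubspace.vadd_mem_iff_mem_direction v hp]
  simp [vadd_vsub_assoc, mem_polarHyperplane.1 hp]

end Ring

variable [DivisionRing k] [Module k V]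

theorem polarHyperplane_nonempty_iff {o : P} {φ : Dual k V} :
    (polarHyperplane o φ : Set P).Nonempty ↔ φ ≠ 0 := by
  constructor
  · rintro ⟨x, hx : φ (x -ᵥ o) = 1⟩ rfl
    simp at hx
  · intro hφ
    obtain ⟨v, hv⟩ := LinearMap.surjective hφ 1
    exact ⟨v +ᵥ o, by simpa using hv⟩

theorem isCoatom_direction_polarHyperplane (o : P) {φ : Dual k V} (hφ : φ ≠ 0) :
    IsCoatom (polarHyperplane o φ).direction := by
  rw [direction_polarHyperplane (polarHyperplane_nonempty_iff.2 hφ)]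
  exact LinearMap.isCoatom_ker_of_surjective (LinearMap.surjective hφ)

theorem polarHyperplane_injective (o : P) :
    Function.Injective (polarHyperplane o : Dual k V → AffineSubspace k P) := by
  intro φ ψ h
  have apply_eq_one_iff (v : V) : φ v = 1 ↔ ψ v = 1 := by
    simpa using SetLike.ext_iff.1 h (v +ᵥ o)
  rcases eq_or_ne φ 0 with rfl | hφ
  · by_contra hψ
    obtain ⟨v, hv⟩ := LinearMap.surjective (Ne.symm hψ) 1
    simpa using (apply_eq_one_iff v).2 hv
  · obtain ⟨u, hφu⟩ := LinearMap.surjective hφ 1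
    have hψu : ψ u = 1 := (apply_eq_one_iff u).1 hφu
    ext w
    have hψw : ψ (w - φ w • u + u) = 1 := (apply_eq_one_iff _).1 (by simp [hφu])
    have hsub : ψ w - φ w = 0 := by simpa [hψu] using hψw
    exact (sub_eq_zero.1 hsub).symm

theorem exists_ker_eq_and_apply_eq_one {D : Submodule k V} (hD : IsCoatom D) {v : V}
    (hv : v ∉ D) : ∃ φ : Dual k V, φ.ker = D ∧ φ v = 1 := by
  obtain ⟨φ, hφD, hφv⟩ := LinearMap.exists_extend_of_notMem (0 : D →ₗ[k] k) hv 1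
  have hle : D ≤ φ.ker := fun w hw ↦ LinearMap.congr_fun hφD ⟨w, hw⟩
  have hne : φ.ker ≠ ⊤ := by
    rw [Ne, LinearMap.ker_eq_top]
    rintro rfl
    simp at hφv
  exact ⟨φ, (hD.le_iff_eq hne).1 hle, hφv⟩

theorem exists_polarHyperplane_eq {H : AffineSubspace k P} {o : P}
    (hne : (H : Set P).Nonempty) (hdir : IsCoatom H.direction) (ho : o ∉ H) :
    ∃ φ : Dual k V, polarHyperplane o φ = H := by
  obtain ⟨p, hp⟩ := hne
  have hop : p -ᵥ o ∉ H.direction := by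
    rwa [AffineSubspace.vsub_left_mem_direction_iff_mem hp]
  obtain ⟨φ, hker, hφ⟩ := exists_ker_eq_and_apply_eq_one hdir hop
  refine ⟨φ, ?_⟩
  ext x
  rw [← AffineSubspace.vsub_right_mem_direction_iff_mem hp, ← hker, LinearMap.mem_ker,
    mem_polarHyperplane, ← vsub_sub_vsub_cancel_right x p o, map_sub, hφ, sub_eq_zero]

theorem setOf_hyperplanes_avoiding_eq_image {ι : Type*} (p : ι → P) (i₀ : ι) :
    {H : AffineSubspace k P | (H : Set P).Nonempty ∧ IsCoatom H.direction ∧ ∀ i, p i ∉ H} =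
      polarHyperplane (p i₀) '' {φ | φ ≠ 0 ∧ ∀ i, φ (p i -ᵥ p i₀) ≠ 1} := by
  ext H
  constructor
  · rintro ⟨hne, hdir, hp⟩
    obtain ⟨φ, rfl⟩ := exists_polarHyperplane_eq hne hdir (hp i₀)
    exact ⟨φ, ⟨polarHyperplane_nonempty_iff.1 hne, hp⟩, rfl⟩
  · rintro ⟨φ, ⟨hφ, hp⟩, rfl⟩
    exact ⟨polarHyperplane_nonempty_iff.2 hφ, isCoatom_direction_polarHyperplane _ hφ, hp⟩

end PolarHyperplane

theorem isCoatom_iff_finrank_add_one_eq {k V : Type*} [DivisionRing k] [AddCommGroup V]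
    [Module k V] [FiniteDimensional k V] {D : Submodule k V} :
    IsCoatom D ↔ finrank k D + 1 = finrank k V := by
  rw [← isSimpleModule_iff_isCoatom, isSimpleModule_iff_finrank_eq_one,
    ← D.finrank_quotient_add_finrank]
  omega

theorem ncard_univ_pi {ι : Type*} {α : ι → Type*} [Fintype ι] (s : ∀ i, Set (α i)) :
    (Set.univ.pi s).ncard = ∏ i, (s i).ncard := by
  simp only [← Nat.card_coe_set_eq, ← Nat.card_pi]
  exact Nat.card_congr (Equiv.Set.univPi s)

theorem ncard_ne_const_and_forall_ne {ι α : Type*} [Finite ι] [Finite α] {a b : α} (hab : a ≠ b) :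
    {c : ι → α | c ≠ Function.const ι a ∧ ∀ i, c i ≠ b}.ncard =
      (Nat.card α - 1) ^ Nat.card ι - 1 := by
  have := Fintype.ofFinite ι
  have heq : {c : ι → α | c ≠ Function.const ι a ∧ ∀ i, c i ≠ b} =
      Set.univ.pi (fun _ ↦ {b}ᶜ) \ {Function.const ι a} := by
    ext c
    simp [and_comm]
  rw [heq, Set.ncard_sdiff_singleton_of_mem (by simp [hab]), ncard_univ_pi, Finset.prod_const,
    Finset.card_univ, Set.ncard_compl, Set.ncard_singleton, Nat.card_eq_fintype_card (α := ι)]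

theorem ncard_dual_ne_zero_and_forall_basis_ne_one {ι k V : Type*} [Finite ι] [Ring k]
    [Nontrivial k] [Finite k] [AddCommGroup V] [Module k V] (e : Basis ι k V) :
    {φ : Dual k V | φ ≠ 0 ∧ ∀ i, φ (e i) ≠ 1}.ncard =
      (Nat.card k - 1) ^ finrank k V - 1 := by
  rw [finrank_eq_nat_card_basis e, ← ncard_ne_const_and_forall_ne (zero_ne_one' k),
    ← Set.ncard_image_of_injective _ (e.constr ℕ).injective]
  congr 1
  ext φ
  simp [LinearEquiv.image_eq_preimage_symm]

theorem hyperplanes_avoiding_basis_count_AG_general {ι k V P : Type*} [Finite ι]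
    [DivisionRing k] [Finite k] [AddCommGroup V] [Module k V] [AddTorsor V P]
    (b : AffineBasis ι k P) :
    Nat.card {H : AffineSubspace k P | (H : Set P).Nonempty ∧
        finrank k H.direction + 1 = finrank k V ∧ ∀ i, b i ∉ H} =
      (Nat.card k - 1) ^ finrank k V - 1 := by
  obtain ⟨i₀⟩ := b.nonempty
  have : FiniteDimensional k V := b.finiteDimensional
  have hbasis (φ : Dual k V) :
      (∀ i, φ (b i -ᵥ b i₀) ≠ 1) ↔ ∀ j, φ (b.basisOf i₀ j) ≠ 1 := by
    refine ⟨fun h j ↦ by simpa using h j, fun h i ↦ ?_⟩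
    rcases eq_or_ne i i₀ with rfl | hi
    · simp
    · simpa using h ⟨i, hi⟩
  simp only [← isCoatom_iff_finrank_add_one_eq]
  rw [setOf_hyperplanes_avoiding_eq_image b i₀,
    Nat.card_image_of_injective (polarHyperplane_injective _), Nat.card_coe_set_eq]
  simp only [hbasis, ncard_dual_ne_zero_and_forall_basis_ne_one]

/-- If `B = {b₁, …, b_r}` is an affine basis of `AG(r-1, q)`, there are precisely
`(q-1)^(r-1) - 1` affine hyperplanes (affine subspaces of dimension `r-2`)
containing no element of `B`. -/
theorem hyperplanes_avoiding_basis_count_AG (F : Type*) [Field F] [Fintype F] (q r : ℕ)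
    (hq : Fintype.card F = q) (hr : 2 ≤ r)
    (b : AffineBasis (Fin r) F (Fin (r - 1) → F)) :
    Nat.card {H : AffineSubspace F (Fin (r - 1) → F) |
        (H : Set (Fin (r - 1) → F)).Nonempty ∧
        Module.finrank F H.direction = r - 2 ∧
        ∀ i, b i ∉ H} = (q - 1) ^ (r - 1) - 1 := by
  have hdim (d : ℕ) : d = r - 2 ↔ d + 1 = finrank F (Fin (r - 1) → F) := by
    rw [finrank_fin_fun]
    omega
  simpa [hdim, hq] using hyperplanes_avoiding_basis_count_AG_general b
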